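/- arXiv:2104.10651 — 10 statements merged into one kernel-verified Lean document; each statement's English description precedes it below -/
import Mathlib

section
/- Let m_b be a mass function on a finite nonempty set Θ with belief function b, and let A ⊆ Θ be nonempty. Then the set of minimizers, over all mass functions m_a in the conditioning simplex M_A, of the L_1 distance ‖m_b − m_a‖_{L_1} is exactly the set { m_a ∈ M_A : m_a(B) ≥ m_b(B) for every nonempty B ⊆ A }. -/
open Finset

/-- A mass function on the finite frame `Θ`. -/
def IsMassFun {Θ : Type*} [Fintype Θ] [DecidableEq Θ] (m : Finset Θ → ℝ) : Prop :=
  m ∅ = 0 ∧ (∀ B, 0 ≤ m B) ∧ ∑ B : Finset Θ, m B = 1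

/-- The conditioning simplex `M_A`: mass functions supported on nonempty subsets of `A`. -/
def condSimplex {Θ : Type*} [Fintype Θ] [DecidableEq Θ] (A : Finset Θ) :
    Set (Finset Θ → ℝ) :=
  {m | IsMassFun m ∧ ∀ B : Finset Θ, ¬(B ≠ ∅ ∧ B ⊆ A) → m B = 0}

/-- The `L₁` distance between two mass vectors (indexed by nonempty subsets of `Θ`). -/
def dL1 {Θ : Type*} [Fintype Θ] [DecidableEq Θ] (m m' : Finset Θ → ℝ) : ℝ :=
  ∑ B ∈ Finset.univ.filter (fun B : Finset Θ => B ≠ ∅), |m B - m' B|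

lemma dL1_eq_univ {Θ : Type*} [Fintype Θ] [DecidableEq Θ] (m m' : Finset Θ → ℝ)
    (h : m ∅ = 0) (h' : m' ∅ = 0) : dL1 m m' = ∑ B : Finset Θ, |m B - m' B| := by
  unfold dL1
  apply Finset.sum_subset (Finset.subset_univ _)
  intro B _ hB
  have : B = ∅ := by simpa using hB
  subst this
  simp [h, h']

/-- the distance, minus the constant optimal value, as a sum of excesses -/
lemma dL1_decomp {Θ : Type*} [Fintype Θ] [DecidableEq Θ] (mb m : Finset Θ → ℝ)
    (hmb : IsMassFun mb) (A : Finset Θ) (hm : m ∈ condSimplex A) :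
    dL1 mb m = (∑ B : Finset Θ, (if B ≠ ∅ ∧ B ⊆ A then -mb B else mb B) + 1) +
      ∑ B : Finset Θ, (|mb B - m B| - (if B ≠ ∅ ∧ B ⊆ A then m B - mb B else mb B - m B)) := by
  obtain ⟨⟨h0, _, h1⟩, hs⟩ := hm
  rw [dL1_eq_univ mb m hmb.1 h0, ← h1, ← Finset.sum_add_distrib, ← Finset.sum_add_distrib]
  apply Finset.sum_congr rfl
  intro B _
  have := hs B
  split_ifs with h
  · ring
  · rw [this h]; ring

lemma excess_nonneg {Θ : Type*} [Fintype Θ] [DecidableEq Θ] (mb m : Finset Θ → ℝ)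
    (A B : Finset Θ) :
    0 ≤ |mb B - m B| - (if B ≠ ∅ ∧ B ⊆ A then m B - mb B else mb B - m B) := by
  split_ifs
  · linarith [neg_le_abs (mb B - m B)]
  · linarith [le_abs_self (mb B - m B)]

lemma dL1_of_dom {Θ : Type*} [Fintype Θ] [DecidableEq Θ] (mb m : Finset Θ → ℝ)
    (hmb : IsMassFun mb) (A : Finset Θ) (hm : m ∈ condSimplex A)
    (hd : ∀ B : Finset Θ, B ≠ ∅ → B ⊆ A → mb B ≤ m B) :
    dL1 mb m = ∑ B : Finset Θ, (if B ≠ ∅ ∧ B ⊆ A then -mb B else mb B) + 1 := by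
  rw [dL1_decomp mb m hmb A hm, add_eq_left]
  apply Finset.sum_eq_zero
  intro B _
  split_ifs with h
  · rw [abs_of_nonpos (by linarith [hd B h.1 h.2])]; ring
  · rw [hm.2 B h, abs_of_nonneg (by linarith [hmb.2.1 B])]; ring

lemma exists_dom {Θ : Type*} [Fintype Θ] [DecidableEq Θ] (mb : Finset Θ → ℝ)
    (hmb : IsMassFun mb) (A : Finset Θ) (hA : A.Nonempty) :
    ∃ m ∈ condSimplex A, ∀ B : Finset Θ, B ≠ ∅ → B ⊆ A → mb B ≤ m B := by
  obtain ⟨h0, hp, h1⟩ := hmb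
  set r : ℝ := ∑ B : Finset Θ, (if B ≠ ∅ ∧ B ⊆ A then 0 else mb B) with hr
  have hr0 : 0 ≤ r := by
    apply Finset.sum_nonneg
    intro B _
    split_ifs
    · exact le_rfl
    · exact hp B
  refine ⟨fun B => (if B ≠ ∅ ∧ B ⊆ A then mb B else 0) + (if B = A then r else 0),
    ⟨⟨?_, ?_, ?_⟩, ?_⟩, ?_⟩
  · have : ¬ (∅ = A) := fun h => hA.ne_empty h.symm
    simp [this]
  · intro B
    have := hp B
    dsimp only
    split_ifs <;> linarith
  · rw [Finset.sum_add_distrib, Finset.sum_ite_eq' Finset.univ A, if_pos (Finset.mem_univ _),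
      hr, ← Finset.sum_add_distrib, ← h1]
    apply Finset.sum_congr rfl
    intro B _
    split_ifs <;> simp
  · intro B hB
    have : B ≠ A := fun h => hB ⟨h ▸ hA.ne_empty, h.subset⟩
    dsimp only
    rw [if_neg hB, if_neg this, add_zero]
  · intro B h h'
    dsimp only
    rw [if_pos ⟨h, h'⟩]
    split_ifs <;> linarith

/-- the minimizers over the conditioning simplex `M_A` of the `L₁` distance to
`mb` are exactly the elements of `M_A` whose mass dominates that of `mb` on every nonempty
subset of `A`. -/
theorem stmt2 {Θ : Type*} [Fintype Θ] [DecidableEq Θ] [Nonempty Θ]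
    (mb : Finset Θ → ℝ) (hmb : IsMassFun mb)
    (A : Finset Θ) (hA : A.Nonempty) :
    {ma | ma ∈ condSimplex A ∧ ∀ m' ∈ condSimplex A, dL1 mb ma ≤ dL1 mb m'} =
    {ma | ma ∈ condSimplex A ∧ ∀ B : Finset Θ, B ≠ ∅ → B ⊆ A → mb B ≤ ma B} := by
  ext ma
  simp only [Set.mem_ofPred_eq]
  refine and_congr_right fun hma => ⟨fun hmin B hB hBA => ?_, fun hd m' hm' => ?_⟩
  · obtain ⟨m, hm, hd⟩ := exists_dom mb hmb A hA
    have h := hmin m hm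
    rw [dL1_of_dom mb m hmb A hm hd, dL1_decomp mb ma hmb A hma] at h
    have h2 := Finset.single_le_sum (fun B _ => excess_nonneg mb ma A B) (Finset.mem_univ B)
    rw [if_pos ⟨hB, hBA⟩] at h2
    linarith [abs_nonneg (mb B - ma B)]
  · rw [dL1_of_dom mb ma hmb A hma hd, dL1_decomp mb m' hmb A hm']
    linarith [Finset.sum_nonneg (fun B (_ : B ∈ Finset.univ) => excess_nonneg mb m' A B)]
end

section
/- Let m_b be a mass function on a finite nonempty set Θ with belief function b, and let A ⊆ Θ be nonempty. The set { m_a ∈ M_A : m_a(B) ≥ m_b(B) for every nonempty B ⊆ A } of L_1 conditional mass functions equals the convex hull of the 2^{|A|} − 1 points { v_B : ∅ ≠ B ⊆ A }, where the vertex v_B is the function on nonempty subsets of Θ defined by v_B(B) = m_b(B) + 1 − b(A) = m_b(B) + pl(A^c), v_B(X) = m_b(X) for every nonempty X ⊆ A with X ≠ B, and v_B(X) = 0 for every X ⊄ A. -/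
open Finset

/-- Belief value `b(A) = ∑_{B ⊆ A} m(B)`. -/
def bel {Θ : Type*} [Fintype Θ] [DecidableEq Θ] (m : Finset Θ → ℝ) (A : Finset Θ) : ℝ :=
  ∑ B ∈ A.powerset, m B

/-- Plausibility value `pl(A) = ∑_{B ∩ A ≠ ∅} m(B)`. -/
def plaus {Θ : Type*} [Fintype Θ] [DecidableEq Θ] (m : Finset Θ → ℝ) (A : Finset Θ) : ℝ :=
  ∑ B ∈ Finset.univ.filter (fun B : Finset Θ => (B ∩ A).Nonempty), m B

/-- The vertex `v_B` of the `L₁` conditional simplex: it adds `1 - b(A)` to the mass of `B`,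
keeps the mass of the other nonempty subsets of `A`, and vanishes elsewhere. -/
def vertexL1 {Θ : Type*} [Fintype Θ] [DecidableEq Θ] (mb : Finset Θ → ℝ) (A B : Finset Θ) :
    Finset Θ → ℝ :=
  fun X => if X = B then mb B + 1 - bel mb A
           else if X ≠ ∅ ∧ X ⊆ A then mb X else 0

theorem aux_vertex {Θ : Type*} [Fintype Θ] [DecidableEq Θ] (mb : Finset Θ → ℝ)
    (A B : Finset Θ) (hB : B ≠ ∅) (hBA : B ⊆ A) (X : Finset Θ) :
    vertexL1 mb A B X = (if X ≠ ∅ ∧ X ⊆ A then mb X else 0)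
      + (if X = B then 1 - bel mb A else 0) := by
  unfold vertexL1
  by_cases h : X = B
  · subst h
    simp only [if_true]
    rw [if_pos ⟨hB, hBA⟩]; ring
  · simp [h]

theorem aux_bel {Θ : Type*} [Fintype Θ] [DecidableEq Θ] (mb : Finset Θ → ℝ)
    (h0 : mb ∅ = 0) (A : Finset Θ) :
    ∑ X : Finset Θ, (if X ≠ ∅ ∧ X ⊆ A then mb X else 0) = bel mb A := by
  unfold bel
  have : A.powerset = Finset.univ.filter (fun X => X ⊆ A) := by ext; simp
  rw [this, Finset.sum_filter]
  refine Finset.sum_congr rfl fun X _ => ?_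
  by_cases h : X = ∅
  · subst h; simp [h0]
  · simp [h]

theorem aux_plaus {Θ : Type*} [Fintype Θ] [DecidableEq Θ] (mb : Finset Θ → ℝ)
    (hmb : IsMassFun mb) (A : Finset Θ) : 1 - bel mb A = plaus mb Aᶜ := by
  unfold bel plaus
  have : A.powerset = Finset.univ.filter (fun X => ¬ (X ∩ Aᶜ).Nonempty) := by
    ext X
    simp only [Finset.mem_powerset, Finset.mem_filter, Finset.mem_univ, true_and,
      Finset.not_nonempty_iff_eq_empty, ← Finset.disjoint_iff_inter_eq_empty]
    exact disjoint_compl_right_iff.symm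
  rw [this, ← hmb.2.2, ← Finset.sum_filter_add_sum_filter_not Finset.univ
    (fun X : Finset Θ => (X ∩ Aᶜ).Nonempty) mb]
  ring

/-- the set of `L₁` conditional mass functions
`{ma ∈ M_A : ma(B) ≥ mb(B) ∀ ∅ ≠ B ⊆ A}` equals the convex hull of the `2^{|A|} - 1`
vertices `v_B`, `∅ ≠ B ⊆ A`; moreover `1 - b(A) = pl(Aᶜ)`. -/
theorem stmt3 {Θ : Type*} [Fintype Θ] [DecidableEq Θ] [Nonempty Θ]
    (mb : Finset Θ → ℝ) (hmb : IsMassFun mb)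
    (A : Finset Θ) (hA : A.Nonempty) :
    (1 - bel mb A = plaus mb Aᶜ) ∧
    {ma | ma ∈ condSimplex A ∧ ∀ B : Finset Θ, B ≠ ∅ → B ⊆ A → mb B ≤ ma B} =
      convexHull ℝ {v | ∃ B : Finset Θ, B ≠ ∅ ∧ B ⊆ A ∧ v = vertexL1 mb A B} := by
  have hpl := aux_plaus mb hmb A
  refine ⟨hpl, ?_⟩
  have hr : 0 ≤ 1 - bel mb A := by
    rw [hpl]; exact Finset.sum_nonneg fun X _ => hmb.2.1 X
  have hbs := aux_bel mb hmb.1 A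
  apply Set.Subset.antisymm
  · rintro ma ⟨⟨⟨m0, mn, ms⟩, msup⟩, hge⟩
    set d : Finset Θ → ℝ := fun X => ma X - (if X ≠ ∅ ∧ X ⊆ A then mb X else 0) with hd
    have hdn : ∀ X, 0 ≤ d X := by
      intro X
      simp only [hd]
      split_ifs with h
      · linarith [hge X h.1 h.2]
      · linarith [mn X]
    have hdz : ∀ X, ¬ (X ≠ ∅ ∧ X ⊆ A) → d X = 0 := by
      intro X h
      simp only [hd]
      rw [if_neg h, msup X h, sub_zero]
    have hds : ∑ X, d X = 1 - bel mb A := by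
      simp only [hd]
      rw [Finset.sum_sub_distrib, ms, hbs]
    have hma : ∀ X, ma X = (if X ≠ ∅ ∧ X ⊆ A then mb X else 0) + d X := by
      intro X; simp only [hd]; ring
    clear_value d
    rcases hr.eq_or_lt with h | h
    · apply subset_convexHull
      refine ⟨A, hA.ne_empty, subset_rfl, ?_⟩
      funext X
      rw [← h] at hds
      have hz := (Finset.sum_eq_zero_iff_of_nonneg (fun X _ => hdn X)).1 hds X (Finset.mem_univ X)
      rw [aux_vertex mb A A hA.ne_empty subset_rfl, hma, hz, ← h]
      simp
    · set S : Finset (Finset Θ) := Finset.univ.filter (fun X => X ≠ ∅ ∧ X ⊆ A) with hS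
      have hsum : ∑ B ∈ S, d B = 1 - bel mb A := by
        rw [← hds]
        apply Finset.sum_subset (Finset.subset_univ _)
        intro X _ hX
        apply hdz
        simpa [hS] using hX
      have hw : ∑ B ∈ S, d B / (1 - bel mb A) = 1 := by
        rw [← Finset.sum_div, hsum, div_self h.ne']
      have key : ma = ∑ B ∈ S, (d B / (1 - bel mb A)) • vertexL1 mb A B := by
        funext X
        rw [Finset.sum_apply]
        have : ∀ B ∈ S, ((d B / (1 - bel mb A)) • vertexL1 mb A B) X
            = d B / (1 - bel mb A) * (if X ≠ ∅ ∧ X ⊆ A then mb X else 0)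
              + (if X = B then d B else 0) := by
          intro B hB
          have hB' : B ≠ ∅ ∧ B ⊆ A := by simpa [hS] using hB
          rw [Pi.smul_apply, smul_eq_mul, aux_vertex mb A B hB'.1 hB'.2, mul_add]
          congr 1
          split_ifs
          · field_simp
          · simp
        rw [Finset.sum_congr rfl this, Finset.sum_add_distrib, ← Finset.sum_mul, hw, one_mul,
          Finset.sum_ite_eq, hma X]
        congr 1
        split_ifs with hX
        · rfl
        · apply hdz; simpa [hS] using hX
      rw [key]
      apply (convex_convexHull ℝ _).sum_mem
      · intro B _; exact div_nonneg (hdn B) hr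
      · exact hw
      · intro B hB
        have hB' : B ≠ ∅ ∧ B ⊆ A := by simpa [hS] using hB
        exact subset_convexHull ℝ _ ⟨B, hB'.1, hB'.2, rfl⟩
  · apply convexHull_min
    · rintro v ⟨B, hB, hBA, rfl⟩
      have hv := aux_vertex mb A B hB hBA
      have hn : ∀ X, 0 ≤ (if X = B then 1 - bel mb A else 0) := by
        intro X; split_ifs <;> linarith
      have hsup : ∀ X, ¬ (X ≠ ∅ ∧ X ⊆ A) → vertexL1 mb A B X = 0 := by
        intro X h
        have : X ≠ B := by rintro rfl; exact h ⟨hB, hBA⟩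
        rw [hv, if_neg h, if_neg this, add_zero]
      refine ⟨⟨⟨hsup _ (by simp), ?_, ?_⟩, hsup⟩, ?_⟩
      · intro X
        rw [hv]
        refine add_nonneg ?_ (hn X)
        split_ifs
        · exact hmb.2.1 X
        · exact le_rfl
      · simp only [hv]
        rw [Finset.sum_add_distrib, hbs]
        simp
      · intro X h1 h2
        rw [hv, if_pos ⟨h1, h2⟩]
        linarith [hn X]
    · rintro x ⟨⟨⟨x0, xn, xs⟩, xsup⟩, hx⟩ y ⟨⟨⟨y0, yn, ys⟩, ysup⟩, hy⟩ a b ha hb hab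
      refine ⟨⟨⟨?_, ?_, ?_⟩, ?_⟩, ?_⟩
      · simp [x0, y0]
      · intro X
        exact add_nonneg (mul_nonneg ha (xn X)) (mul_nonneg hb (yn X))
      · simp only [Pi.add_apply, Pi.smul_apply, smul_eq_mul]
        rw [Finset.sum_add_distrib, ← Finset.mul_sum, ← Finset.mul_sum, xs, ys]
        linarith
      · intro X h
        simp [xsup X h, ysup X h]
      · intro X h1 h2
        simp only [Pi.add_apply, Pi.smul_apply, smul_eq_mul]
        calc mb X = a * mb X + b * mb X := by rw [← add_mul, hab, one_mul]
          _ ≤ _ := add_le_add (mul_le_mul_of_nonneg_left (hx X h1 h2) ha)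
            (mul_le_mul_of_nonneg_left (hy X h1 h2) hb)
end

section
/- Let m_b be a mass function on a finite nonempty set Θ with belief function b, let A ⊆ Θ be nonempty, and for each nonempty B ⊆ A define v_B on nonempty subsets of Θ by v_B(B) = m_b(B) + 1 − b(A), v_B(X) = m_b(X) for nonempty X ⊆ A with X ≠ B, and v_B(X) = 0 for X ⊄ A. Then every v_B is itself a mass function (all its values are nonnegative and they sum to 1), hence each vertex of the L_1 conditional simplex lies in the conditioning simplex M_A. -/
open Finset

/-- every vertex `v_B` (`∅ ≠ B ⊆ A`) of the `L₁` conditional simplex is itself a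
mass function — its values are nonnegative and sum to 1 — hence it lies in the conditioning
simplex `M_A`. -/
theorem stmt4 {Θ : Type*} [Fintype Θ] [DecidableEq Θ] [Nonempty Θ]
    (mb : Finset Θ → ℝ) (hmb : IsMassFun mb)
    (A : Finset Θ) (hA : A.Nonempty)
    (B : Finset Θ) (hBne : B ≠ ∅) (hBA : B ⊆ A) :
    (∀ X : Finset Θ, 0 ≤ vertexL1 mb A B X) ∧
    (∑ X : Finset Θ, vertexL1 mb A B X = 1) ∧
    vertexL1 mb A B ∈ condSimplex A := by
  obtain ⟨h0, hpos, hsum⟩ := hmb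
  have hbel : bel mb A ≤ 1 := by
    rw [← hsum]
    exact Finset.sum_le_sum_of_subset_of_nonneg (Finset.subset_univ _) (fun i _ _ => hpos i)
  have hnn : ∀ X : Finset Θ, 0 ≤ vertexL1 mb A B X := by
    intro X
    unfold vertexL1
    have hB := hpos B
    split_ifs
    · linarith
    · exact hpos X
    · exact le_rfl
  have hform : ∀ X : Finset Θ, vertexL1 mb A B X =
      (if X ∈ A.powerset then mb X else 0) + (if X = B then 1 - bel mb A else 0) := by
    intro X
    unfold vertexL1
    by_cases hXB : X = B
    · subst hXB
      simp [hBA]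
      ring
    · by_cases hX : X = ∅
      · subst hX
        simp [hXB, h0]
      · simp [hXB, hX]
  have hs : ∑ X : Finset Θ, vertexL1 mb A B X = 1 := by
    simp_rw [hform]
    rw [Finset.sum_add_distrib, Finset.sum_ite_mem, Finset.univ_inter, Finset.sum_ite_eq']
    simp [bel]
  have hz : ∀ X : Finset Θ, ¬(X ≠ ∅ ∧ X ⊆ A) → vertexL1 mb A B X = 0 := by
    intro X hX
    have hXB : X ≠ B := by
      rintro rfl
      exact hX ⟨hBne, hBA⟩
    unfold vertexL1
    rw [if_neg hXB, if_neg hX]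
  exact ⟨hnn, hs, ⟨hz ∅ (by simp), hnn, hs⟩, hz⟩
end

section
/- Let m_b be a mass function on a finite nonempty set Θ with belief function b and plausibility pl, and let A ⊆ Θ be nonempty. Then the L_2 (Euclidean) distance from m_b to the conditioning simplex M_A has a unique minimizer, namely the mass function m*(·|A) given by m*(B|A) = m_b(B) + pl(A^c)/(2^{|A|} − 1) for every nonempty B ⊆ A, and m*(X|A) = 0 for X ⊄ A, where pl(A^c) = 1 − b(A) = Σ_{C⊄A} m_b(C). -/
open Finset

/-- The `L₂` distance between two mass vectors (indexed by nonempty subsets of `Θ`). -/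
noncomputable def dL2 {Θ : Type*} [Fintype Θ] [DecidableEq Θ] (m m' : Finset Θ → ℝ) : ℝ :=
  Real.sqrt (∑ B ∈ Finset.univ.filter (fun B : Finset Θ => B ≠ ∅), (m B - m' B) ^ 2)

/-- The candidate `L₂` conditional mass function: redistribute `pl(Aᶜ)` equally among the
`2^{|A|} - 1` nonempty subsets of `A`. -/
noncomputable def mL2 {Θ : Type*} [Fintype Θ] [DecidableEq Θ] (mb : Finset Θ → ℝ)
    (A : Finset Θ) : Finset Θ → ℝ :=
  fun B => if B ≠ ∅ ∧ B ⊆ A then mb B + plaus mb Aᶜ / ((2 : ℝ) ^ A.card - 1) else 0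

/-- the `L₂` distance from `mb` to the conditioning simplex `M_A` is minimized
uniquely by `mL2 mb A`, where `pl(Aᶜ) = 1 - b(A) = ∑_{C ⊄ A} mb C`. -/
theorem stmt5 {Θ : Type*} [Fintype Θ] [DecidableEq Θ] [Nonempty Θ]
    (mb : Finset Θ → ℝ) (hmb : IsMassFun mb)
    (A : Finset Θ) (hA : A.Nonempty) :
    (plaus mb Aᶜ = 1 - bel mb A) ∧
    (plaus mb Aᶜ = ∑ C ∈ Finset.univ.filter (fun C : Finset Θ => ¬ C ⊆ A), mb C) ∧
    mL2 mb A ∈ condSimplex A ∧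
    (∀ m' ∈ condSimplex A, dL2 mb (mL2 mb A) ≤ dL2 mb m') ∧
    (∀ m' ∈ condSimplex A, (∀ m'' ∈ condSimplex A, dL2 mb m' ≤ dL2 mb m'') → m' = mL2 mb A) := by
  obtain ⟨h0, hnn, hsum⟩ := hmb
  have hpl : plaus mb Aᶜ = ∑ C ∈ Finset.univ.filter (fun C : Finset Θ => ¬ C ⊆ A), mb C := by
    unfold plaus
    congr 1
    ext C
    simp only [Finset.mem_filter, Finset.mem_univ, true_and, Finset.not_subset]
    constructor
    · rintro ⟨x, hx⟩
      simp only [Finset.mem_inter, Finset.mem_compl] at hx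
      exact ⟨x, hx.1, hx.2⟩
    · rintro ⟨x, hx, hx2⟩
      exact ⟨x, by simp [hx, hx2]⟩
  have hps : A.powerset = Finset.univ.filter (fun C : Finset Θ => C ⊆ A) := by
    ext C
    simp
  have hbel : plaus mb Aᶜ = 1 - bel mb A := by
    have h := Finset.sum_filter_add_sum_filter_not Finset.univ (fun C : Finset Θ => C ⊆ A) mb
    rw [hsum] at h
    rw [hpl]
    unfold bel
    rw [hps]
    linarith
  have hplnn : 0 ≤ plaus mb Aᶜ := Finset.sum_nonneg fun B _ => hnn B
  have hpow : (1 : ℝ) < (2 : ℝ) ^ A.card :=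
    one_lt_pow₀ (by norm_num) (Finset.card_pos.mpr hA).ne'
  have hd : (0 : ℝ) < (2 : ℝ) ^ A.card - 1 := by linarith
  obtain ⟨c, hc⟩ : ∃ c, c = plaus mb Aᶜ / ((2 : ℝ) ^ A.card - 1) := ⟨_, rfl⟩
  have hcnn : 0 ≤ c := hc ▸ div_nonneg hplnn hd.le
  have hmdef : ∀ B, mL2 mb A B = if B ≠ ∅ ∧ B ⊆ A then mb B + c else 0 := by
    intro B
    rw [hc]
    rfl
  have hmem : mL2 mb A ∈ condSimplex A := by
    refine ⟨⟨by simp [hmdef], fun B => ?_, ?_⟩, fun B hB => by rw [hmdef, if_neg hB]⟩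
    · rw [hmdef]
      split_ifs
      · exact add_nonneg (hnn B) hcnn
      · exact le_rfl
    · have he : Finset.univ.filter (fun B : Finset Θ => B ≠ ∅ ∧ B ⊆ A) = A.powerset.erase ∅ := by
        ext B
        simp
      have hem : (∅ : Finset Θ) ∈ A.powerset := by simp
      simp only [hmdef]
      rw [← Finset.sum_filter, he]
      have h1 := Finset.sum_erase_add A.powerset (fun B => mb B + c) hem
      rw [Finset.sum_add_distrib (s := A.powerset), Finset.sum_const, Finset.card_powerset,
        nsmul_eq_mul] at h1
      push_cast at h1
      have h2 : c * ((2 : ℝ) ^ A.card - 1) = plaus mb Aᶜ := by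
        rw [hc]
        exact div_mul_cancel₀ _ hd.ne'
      have h3 : bel mb A = ∑ B ∈ A.powerset, mb B := rfl
      rw [← h3, h0] at h1
      linarith
  have hpyth : ∀ m' ∈ condSimplex A,
      ∑ B ∈ Finset.univ.filter (fun B : Finset Θ => B ≠ ∅), (mb B - m' B) ^ 2 =
      ∑ B ∈ Finset.univ.filter (fun B : Finset Θ => B ≠ ∅), (mb B - mL2 mb A B) ^ 2 +
      ∑ B : Finset Θ, (mL2 mb A B - m' B) ^ 2 := by
    intro m' hm'
    have hE : ∀ f : Finset Θ → ℝ, f ∅ = 0 →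
        ∑ B ∈ Finset.univ.filter (fun B : Finset Θ => B ≠ ∅), f B = ∑ B, f B := by
      intro f hf
      rw [Finset.sum_filter]
      refine Finset.sum_congr rfl fun B _ => ?_
      split_ifs with h
      · rfl
      · rw [not_not.mp h, hf]
    rw [hE _ (by simp [h0, hm'.1.1]), hE _ (by simp [h0, hmem.1.1])]
    have hz : ∑ B : Finset Θ, (-2 * c) * (mL2 mb A B - m' B) = 0 := by
      rw [← Finset.mul_sum, Finset.sum_sub_distrib, hmem.1.2.2, hm'.1.2.2]
      ring
    rw [← Finset.sum_add_distrib, ← add_zero (∑ B : Finset Θ, (_ + _)), ← hz,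
      ← Finset.sum_add_distrib]
    refine Finset.sum_congr rfl fun B _ => ?_
    by_cases hB : B ≠ ∅ ∧ B ⊆ A
    · rw [hmdef, if_pos hB]
      ring
    · rw [hmem.2 B hB, hm'.2 B hB]
      ring
  refine ⟨hbel, hpl, hmem, fun m' hm' => ?_, fun m' hm' hmin => ?_⟩
  · unfold dL2
    apply Real.sqrt_le_sqrt
    rw [hpyth m' hm']
    have : 0 ≤ ∑ B : Finset Θ, (mL2 mb A B - m' B) ^ 2 := Finset.sum_nonneg fun B _ => sq_nonneg _
    linarith
  · have h := hmin _ hmem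
    unfold dL2 at h
    rw [Real.sqrt_le_sqrt_iff (Finset.sum_nonneg fun B _ => sq_nonneg _), hpyth m' hm'] at h
    have h1 : 0 ≤ ∑ B : Finset Θ, (mL2 mb A B - m' B) ^ 2 := Finset.sum_nonneg fun B _ => sq_nonneg _
    have h2 : ∑ B : Finset Θ, (mL2 mb A B - m' B) ^ 2 = 0 := by linarith
    rw [Finset.sum_eq_zero_iff_of_nonneg fun B _ => sq_nonneg _] at h2
    funext B
    have h3 := pow_eq_zero_iff (two_ne_zero) |>.mp (h2 B (Finset.mem_univ B))
    linarith
end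

section
/- Let m_b be a mass function on a finite nonempty set Θ, and let A ⊆ Θ be nonempty with A ≠ Θ. Suppose max_{C⊄A} m_b(C) < (1/(2^{|A|}−1)) Σ_{C⊄A} m_b(C). Then the L_∞ distance from m_b to the affine subspace V_A of signed mass assignments supported in A and summing to 1 has a unique minimizer, given by B ↦ m_b(B) + (1/(2^{|A|}−1)) Σ_{C⊄A} m_b(C) for every nonempty B ⊆ A and 0 for B ⊄ A; this coincides with the L_2 conditional mass function of m_b given A. -/
open Finset

/-- The affine subspace `V_A` of signed mass assignments supported on nonempty subsets of `A`
and summing to 1. -/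
def affineVA {Θ : Type*} [Fintype Θ] [DecidableEq Θ] (A : Finset Θ) :
    Set (Finset Θ → ℝ) :=
  {α | α ∅ = 0 ∧ (∀ B : Finset Θ, ¬ B ⊆ A → α B = 0) ∧
    ∑ B ∈ A.powerset.filter (fun B => B ≠ ∅), α B = 1}

/-- The `L∞` distance between two mass vectors (indexed by the nonempty subsets of `Θ`). -/
noncomputable def dLinf {Θ : Type*} [Fintype Θ] [DecidableEq Θ] [Nonempty Θ]
    (α α' : Finset Θ → ℝ) : ℝ :=
  (Finset.univ.filter fun B : Finset Θ => B ≠ ∅).sup'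
    (by
      obtain ⟨θ⟩ := ‹Nonempty Θ›
      exact ⟨{θ}, by simp⟩)
    fun B => |α B - α' B|

/-- `max_{C ⊄ A} mb C`, well defined when `A ≠ Θ`. -/
noncomputable def maxOut {Θ : Type*} [Fintype Θ] [DecidableEq Θ]
    (mb : Finset Θ → ℝ) (A : Finset Θ) (h : A ≠ Finset.univ) : ℝ :=
  (Finset.univ.filter fun C : Finset Θ => ¬ C ⊆ A).sup'
    (by
      obtain ⟨θ, hθ⟩ : ∃ θ, θ ∉ A := by
        by_contra hc
        push_neg at hc
        exact h (Finset.eq_univ_iff_forall.mpr hc)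
      exact ⟨{θ}, by simp [hθ]⟩)
    mb

/-- `∑_{C ⊄ A} mb C`. -/
def sumOut {Θ : Type*} [Fintype Θ] [DecidableEq Θ] (mb : Finset Θ → ℝ) (A : Finset Θ) : ℝ :=
  ∑ C ∈ Finset.univ.filter (fun C : Finset Θ => ¬ C ⊆ A), mb C

/-- The candidate unique `L∞` minimizer: redistribute `∑_{C⊄A} mb C` equally among the
nonempty subsets of `A`. -/
noncomputable def mLinfStar {Θ : Type*} [Fintype Θ] [DecidableEq Θ]
    (mb : Finset Θ → ℝ) (A : Finset Θ) : Finset Θ → ℝ :=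
  fun B => if B ≠ ∅ ∧ B ⊆ A then mb B + sumOut mb A / ((2 : ℝ) ^ A.card - 1) else 0

/-- when `max_{C⊄A} mb C < (∑_{C⊄A} mb C)/(2^{|A|}-1)`, the `L∞` distance from
`mb` to the affine subspace `V_A` has a unique minimizer, namely `mLinfStar mb A`, which
coincides with the `L₂` conditional mass function of `mb` given `A`. -/
theorem stmt8 {Θ : Type*} [Fintype Θ] [DecidableEq Θ] [Nonempty Θ]
    (mb : Finset Θ → ℝ)
    (hmb0 : mb ∅ = 0) (hmbnn : ∀ B, 0 ≤ mb B) (hmbsum : ∑ B : Finset Θ, mb B = 1)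
    (A : Finset Θ) (hA : A.Nonempty) (hAuniv : A ≠ Finset.univ)
    (hcase : maxOut mb A hAuniv < sumOut mb A / ((2 : ℝ) ^ A.card - 1)) :
    mLinfStar mb A ∈ affineVA A ∧
    (∀ α ∈ affineVA A, dLinf mb (mLinfStar mb A) ≤ dLinf mb α) ∧
    (∀ α ∈ affineVA A, (∀ α' ∈ affineVA A, dLinf mb α ≤ dLinf mb α') → α = mLinfStar mb A) ∧
    mLinfStar mb A = fun B =>
      if B ≠ ∅ ∧ B ⊆ A then mb B + (1 - bel mb A) / ((2 : ℝ) ^ A.card - 1) else 0 := by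
  classical
  set S := A.powerset.filter (fun B => B ≠ ∅) with hS
  have memS : ∀ B, B ∈ S ↔ (B ≠ ∅ ∧ B ⊆ A) := by
    intro B
    simp [hS, and_comm]
  have hcard : (S.card : ℝ) = (2 : ℝ) ^ A.card - 1 := by
    have h1 : S = A.powerset.erase ∅ := by
      ext B
      simp [hS, and_comm]
    rw [h1, Finset.card_erase_of_mem (by simp), Finset.card_powerset,
      Nat.cast_sub Nat.one_le_two_pow]
    simp
  have hNpos : (0 : ℝ) < S.card := by
    have : 0 < S.card := Finset.card_pos.mpr ⟨A, (memS A).2 ⟨hA.ne_empty, subset_rfl⟩⟩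
    exact_mod_cast this
  have hbel : bel mb A + sumOut mb A = 1 := by
    have h := Finset.sum_filter_add_sum_filter_not (Finset.univ : Finset (Finset Θ))
      (fun B => B ⊆ A) mb
    have h2 : (Finset.univ.filter fun B : Finset Θ => B ⊆ A) = A.powerset := by
      ext B
      simp
    rw [h2, hmbsum] at h
    exact h
  have hbelS : ∑ B ∈ S, mb B = bel mb A := by
    unfold bel
    rw [hS, Finset.sum_filter]
    apply Finset.sum_congr rfl
    intro B _
    by_cases hB : B = ∅
    · simp [hB, hmb0]
    · simp [hB]
  rw [← hcard] at hcase
  set t := sumOut mb A / (S.card : ℝ) with ht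
  have hNt : (S.card : ℝ) * t = sumOut mb A := by
    rw [ht]
    field_simp
  have hstar : ∀ B, mLinfStar mb A B = if B ≠ ∅ ∧ B ⊆ A then mb B + t else 0 := by
    intro B
    simp only [mLinfStar, ht, hcard]
  have hout : ∀ B, ¬ B ⊆ A → mb B < t := by
    intro B hB
    refine lt_of_le_of_lt ?_ hcase
    exact Finset.le_sup' mb (by simpa using hB)
  have ht0 : 0 ≤ t := by
    apply div_nonneg _ hNpos.le
    exact Finset.sum_nonneg fun B _ => hmbnn B
  have hmem : mLinfStar mb A ∈ affineVA A := by
    refine ⟨by simp [hstar], fun B hB => by simp [hstar, hB], ?_⟩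
    have : ∑ B ∈ S, mLinfStar mb A B = ∑ B ∈ S, (mb B + t) := by
      apply Finset.sum_congr rfl
      intro B hB
      rw [hstar, if_pos ((memS B).1 hB)]
    change ∑ B ∈ S, mLinfStar mb A B = 1
    rw [this, Finset.sum_add_distrib, hbelS, Finset.sum_const, nsmul_eq_mul, hNt, hbel]
  have hd : dLinf mb (mLinfStar mb A) ≤ t := by
    unfold dLinf
    apply Finset.sup'_le
    intro B hB
    have hB0 : B ≠ ∅ := by simpa using hB
    rw [hstar]
    by_cases h : B ⊆ A
    · rw [if_pos ⟨hB0, h⟩]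
      simp [abs_of_nonneg ht0]
    · rw [if_neg (fun h' => h h'.2), sub_zero, abs_of_nonneg (hmbnn B)]
      exact (hout B h).le
  have hle : ∀ α : Finset Θ → ℝ, ∀ B ∈ S, α B - mb B ≤ dLinf mb α := by
    intro α B hB
    have h1 : |mb B - α B| ≤ dLinf mb α :=
      Finset.le_sup' (fun B => |mb B - α B|) (by simpa using ((memS B).1 hB).1)
    have := neg_abs_le (mb B - α B)
    linarith
  have hsum : ∀ α ∈ affineVA A, ∑ B ∈ S, (α B - mb B) = S.card * t := by
    intro α hα
    have h1 : ∑ B ∈ S, α B = 1 := hα.2.2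
    rw [Finset.sum_sub_distrib, h1, hbelS, hNt]
    linarith
  have hlow : ∀ α ∈ affineVA A, t ≤ dLinf mb α := by
    intro α hα
    have h1 := Finset.sum_le_sum (hle α)
    rw [hsum α hα, Finset.sum_const, nsmul_eq_mul] at h1
    exact le_of_mul_le_mul_left h1 hNpos
  refine ⟨hmem, fun α hα => hd.trans (hlow α hα), ?_, ?_⟩
  · intro α hα hmin
    have hdt : dLinf mb α ≤ t := (hmin _ hmem).trans hd
    have hz : ∑ B ∈ S, (t - (α B - mb B)) = 0 := by
      rw [Finset.sum_sub_distrib, hsum α hα, Finset.sum_const, nsmul_eq_mul, sub_self]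
    have hz' := (Finset.sum_eq_zero_iff_of_nonneg
      (fun B hB => by have := hle α B hB; linarith)).1 hz
    funext B
    rw [hstar]
    by_cases h : B ≠ ∅ ∧ B ⊆ A
    · rw [if_pos h]
      have := hz' B ((memS B).2 h)
      linarith
    · rw [if_neg h]
      by_cases hB : B = ∅
      · rw [hB]
        exact hα.1
      · exact hα.2.1 B (fun h' => h ⟨hB, h'⟩)
  · have : 1 - bel mb A = sumOut mb A := by linarith
    rw [this]
    rfl
end

section
/- Let m_b be a mass function on a finite nonempty set Θ, and let A ⊆ Θ be nonempty with A ≠ Θ. For each nonempty B̄ ⊆ A define w_{B̄} by w_{B̄}(B) = m_b(B) + max_{C⊄A} m_b(C) for nonempty B ⊆ A with B ≠ B̄, w_{B̄}(B̄) = m_b(B̄) + Σ_{C⊄A} m_b(C) − (2^{|A|}−2)·max_{C⊄A} m_b(C), and w_{B̄}(X) = 0 for X ⊄ A. Then the barycenter (1/(2^{|A|}−1)) Σ_{∅≠B̄⊆A} w_{B̄} equals the function B ↦ m_b(B) + (1/(2^{|A|}−1)) Σ_{C⊄A} m_b(C) on nonempty B ⊆ A (and 0 for B ⊄ A), i.e.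 the L_2 conditional mass function of m_b given A. -/
open Finset

/-- The vertex `w_{B̄}` of the `L∞` conditional simplex. -/
noncomputable def vertexLinf {Θ : Type*} [Fintype Θ] [DecidableEq Θ]
    (mb : Finset Θ → ℝ) (A : Finset Θ) (h : A ≠ Finset.univ) (Bbar : Finset Θ) :
    Finset Θ → ℝ :=
  fun X =>
    if X = Bbar then mb Bbar + sumOut mb A - ((2 : ℝ) ^ A.card - 2) * maxOut mb A h
    else if X ≠ ∅ ∧ X ⊆ A then mb X + maxOut mb A h
    else 0

/-- the barycenter `(1/(2^{|A|}-1)) ∑_{∅≠B̄⊆A} w_{B̄}` of the vertices of the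
`L∞` conditional simplex equals `B ↦ mb B + (∑_{C⊄A} mb C)/(2^{|A|}-1)` on nonempty `B ⊆ A`
(and 0 for `B ⊄ A`), i.e. the `L₂` conditional mass function (since `∑_{C⊄A} mb C = 1 − b(A)`). -/
theorem stmt9 {Θ : Type*} [Fintype Θ] [DecidableEq Θ] [Nonempty Θ]
    (mb : Finset Θ → ℝ)
    (hmb0 : mb ∅ = 0) (hmbnn : ∀ B, 0 ≤ mb B) (hmbsum : ∑ B : Finset Θ, mb B = 1)
    (A : Finset Θ) (hA : A.Nonempty) (hAuniv : A ≠ Finset.univ) :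
    (∀ X : Finset Θ,
      (1 / ((2 : ℝ) ^ A.card - 1)) *
          ∑ Bbar ∈ A.powerset.filter (fun B => B ≠ ∅), vertexLinf mb A hAuniv Bbar X =
        (if X ≠ ∅ ∧ X ⊆ A then mb X + sumOut mb A / ((2 : ℝ) ^ A.card - 1) else 0)) ∧
    sumOut mb A = 1 - bel mb A := by
  have hpow : (2 : ℝ) ≤ 2 ^ A.card := by
    calc (2 : ℝ) = 2 ^ 1 := by norm_num
      _ ≤ 2 ^ A.card := pow_le_pow_right₀ (by norm_num) hA.card_pos
  have hN : (2 : ℝ) ^ A.card - 1 ≠ 0 := by linarith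
  constructor
  · intro X
    have hcard : (((A.powerset.filter (fun B => B ≠ ∅)).card : ℕ) : ℝ) = 2 ^ A.card - 1 := by
      rw [Finset.filter_ne', Finset.card_erase_of_mem (Finset.empty_mem_powerset A),
        Finset.card_powerset, Nat.cast_sub Nat.one_le_two_pow]
      push_cast
      ring
    by_cases hX : X ≠ ∅ ∧ X ⊆ A
    · have hmem : X ∈ A.powerset.filter (fun B => B ≠ ∅) := by
        simp only [Finset.mem_filter, Finset.mem_powerset]
        exact ⟨hX.2, hX.1⟩
      have hv : ∀ Bbar ∈ A.powerset.filter (fun B => B ≠ ∅), vertexLinf mb A hAuniv Bbar X =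
          (mb X + maxOut mb A hAuniv) + (if X = Bbar then
            sumOut mb A - ((2 : ℝ) ^ A.card - 1) * maxOut mb A hAuniv else 0) := by
        intro Bbar _
        unfold vertexLinf
        by_cases h : X = Bbar
        · subst h
          simp only [if_true]
          ring
        · rw [if_neg h, if_pos hX, if_neg h, add_zero]
      rw [Finset.sum_congr rfl hv, Finset.sum_add_distrib, Finset.sum_const, nsmul_eq_mul, hcard,
        Finset.sum_ite_eq, if_pos hmem, if_pos hX]
      field_simp
      ring
    · rw [if_neg hX, Finset.sum_eq_zero, mul_zero]
      intro Bbar hB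
      simp only [Finset.mem_filter, Finset.mem_powerset] at hB
      unfold vertexLinf
      rw [if_neg, if_neg hX]
      rintro rfl
      exact hX ⟨hB.2, hB.1⟩
  · have h := Finset.sum_filter_add_sum_filter_not Finset.univ (fun C : Finset Θ => C ⊆ A) mb
    have h2 : Finset.univ.filter (fun C : Finset Θ => C ⊆ A) = A.powerset := by
      ext C
      simp
    rw [h2, hmbsum] at h
    unfold sumOut bel
    linarith
end

section
/- Let m_b be a mass function on a finite nonempty set Θ, and let A ⊆ Θ be nonempty with A ≠ Θ. The minimal L_∞ distance from m_b to the affine subspace V_A of signed mass assignments supported in A and summing to 1 equals max_{C⊄A} m_b(C) when max_{C⊄A} m_b(C) ≥ (1/(2^{|A|}−1)) Σ_{C⊄A} m_b(C), and equals (1/(2^{|A|}−1)) Σ_{C⊄A} m_b(C) otherwise. -/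
open Finset

theorem aux_isLeast {Θ : Type*} [Fintype Θ] [DecidableEq Θ] [Nonempty Θ]
    (mb : Finset Θ → ℝ)
    (hmb0 : mb ∅ = 0) (hmbnn : ∀ B, 0 ≤ mb B) (hmbsum : ∑ B : Finset Θ, mb B = 1)
    (A : Finset Θ) (hA : A.Nonempty) (hAuniv : A ≠ Finset.univ) :
    IsLeast (dLinf mb '' affineVA A)
      (max (maxOut mb A hAuniv) (sumOut mb A / ((2 : ℝ) ^ A.card - 1))) := by
  have hN : (0 : ℝ) < (2 : ℝ) ^ A.card - 1 := by
    have := one_lt_pow₀ (one_lt_two : (1 : ℝ) < 2) hA.card_pos.ne'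
    linarith
  have hcard : (((A.powerset.filter (fun B => B ≠ ∅)).card : ℕ) : ℝ) = (2 : ℝ) ^ A.card - 1 := by
    have h1 : A.powerset.filter (fun B => B ≠ ∅) = A.powerset.erase ∅ := by
      ext B; simp [and_comm]
    rw [h1, Finset.card_erase_of_mem (Finset.empty_mem_powerset A), Finset.card_powerset,
      Nat.cast_sub Nat.one_le_two_pow]
    simp
  have hS0 : 0 ≤ sumOut mb A := Finset.sum_nonneg fun C _ => hmbnn C
  have hsplit : ∑ B ∈ A.powerset.filter (fun B => B ≠ ∅), mb B = 1 - sumOut mb A := by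
    have h1 : ∑ B ∈ A.powerset.filter (fun B => B ≠ ∅), mb B
        = ∑ B ∈ Finset.univ.filter (fun B : Finset Θ => B ⊆ A), mb B := by
      apply Finset.sum_subset
      · intro B hB
        simp at hB ⊢
        exact hB.1
      · intro B hB hB'
        simp at hB hB'
        rw [hB' hB, hmb0]
    have h2 := Finset.sum_filter_add_sum_filter_not Finset.univ (fun B : Finset Θ => B ⊆ A) mb
    rw [hmbsum] at h2
    rw [h1]
    unfold sumOut
    linarith
  have hle : ∀ (α : Finset Θ → ℝ) (B : Finset Θ), B ≠ ∅ → |mb B - α B| ≤ dLinf mb α := by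
    intro α B hB
    exact Finset.le_sup' (fun B => |mb B - α B|) (by simpa using hB)
  constructor
  · set t := sumOut mb A / ((2 : ℝ) ^ A.card - 1) with ht
    have ht0 : 0 ≤ t := div_nonneg hS0 hN.le
    let α : Finset Θ → ℝ := fun B => if B ⊆ A ∧ B ≠ ∅ then mb B + t else 0
    have hαin : ∀ B, B ⊆ A → B ≠ ∅ → α B = mb B + t := fun B h1 h2 => if_pos ⟨h1, h2⟩
    have hαout : ∀ B, ¬ B ⊆ A → α B = 0 := fun B h1 => if_neg fun h => h1 h.1
    refine ⟨α, ⟨if_neg fun h => h.2 rfl, hαout, ?_⟩, ?_⟩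
    · have : ∑ B ∈ A.powerset.filter (fun B => B ≠ ∅), α B
          = ∑ B ∈ A.powerset.filter (fun B => B ≠ ∅), (mb B + t) := by
        apply Finset.sum_congr rfl
        intro B hB
        rw [Finset.mem_filter, Finset.mem_powerset] at hB
        exact hαin B hB.1 hB.2
      rw [this, Finset.sum_add_distrib, hsplit, Finset.sum_const, nsmul_eq_mul, hcard, ht,
        mul_div_cancel₀ _ hN.ne']
      ring
    · apply le_antisymm
      · apply Finset.sup'_le
        intro B hB
        have hB0 : B ≠ ∅ := by simpa using hB
        by_cases h : B ⊆ A
        · apply le_max_of_le_right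
          rw [hαin B h hB0, sub_add_cancel_left, abs_neg, abs_of_nonneg ht0]
        · apply le_max_of_le_left
          rw [hαout B h, sub_zero, abs_of_nonneg (hmbnn B)]
          exact Finset.le_sup' mb (by simpa using h)
      · apply max_le
        · apply Finset.sup'_le
          intro C hC
          have hC' : ¬ C ⊆ A := by simpa using hC
          have := hle α C (by rintro rfl; simp at hC')
          rwa [hαout C hC', sub_zero, abs_of_nonneg (hmbnn C)] at this
        · have := hle α A hA.ne_empty
          rwa [hαin A subset_rfl hA.ne_empty, sub_add_cancel_left, abs_neg,
            abs_of_nonneg ht0] at this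
  · rintro _ ⟨α, ⟨_, hα, hsum⟩, rfl⟩
    apply max_le
    · apply Finset.sup'_le
      intro C hC
      have hC' : ¬ C ⊆ A := by simpa using hC
      have := hle α C (by rintro rfl; simp at hC')
      rwa [hα C hC', sub_zero, abs_of_nonneg (hmbnn C)] at this
    · rw [div_le_iff₀ hN, ← hcard]
      have h1 : sumOut mb A = ∑ B ∈ A.powerset.filter (fun B => B ≠ ∅), (α B - mb B) := by
        rw [Finset.sum_sub_distrib, hsum, hsplit]; ring
      rw [h1, mul_comm, ← nsmul_eq_mul]
      apply Finset.sum_le_card_nsmul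
      intro B hB
      rw [Finset.mem_filter] at hB
      refine le_trans ?_ (hle α B hB.2)
      rw [abs_sub_comm]
      exact le_abs_self _

/-- the minimal `L∞` distance from `mb` to the affine subspace `V_A` equals
`max_{C⊄A} mb C` when `max_{C⊄A} mb C ≥ (∑_{C⊄A} mb C)/(2^{|A|}-1)`, and equals
`(∑_{C⊄A} mb C)/(2^{|A|}-1)` otherwise. -/
theorem stmt10 {Θ : Type*} [Fintype Θ] [DecidableEq Θ] [Nonempty Θ]
    (mb : Finset Θ → ℝ)
    (hmb0 : mb ∅ = 0) (hmbnn : ∀ B, 0 ≤ mb B) (hmbsum : ∑ B : Finset Θ, mb B = 1)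
    (A : Finset Θ) (hA : A.Nonempty) (hAuniv : A ≠ Finset.univ) :
    (sumOut mb A / ((2 : ℝ) ^ A.card - 1) ≤ maxOut mb A hAuniv →
      IsLeast (dLinf mb '' affineVA A) (maxOut mb A hAuniv)) ∧
    (maxOut mb A hAuniv < sumOut mb A / ((2 : ℝ) ^ A.card - 1) →
      IsLeast (dLinf mb '' affineVA A) (sumOut mb A / ((2 : ℝ) ^ A.card - 1))) := by
  have h := aux_isLeast mb hmb0 hmbnn hmbsum A hA hAuniv
  constructor
  · intro h1
    rwa [max_eq_left h1] at h
  · intro h1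
    rwa [max_eq_right h1.le] at h
end

section
/- Let n ≥ 1 and k ≥ 0 be given, and define f : ℝⁿ → ℝ by f(x) = Σ_{i=1}^n |x_i| + |Σ_{i=1}^n x_i + k|. Then the minimum value of f over ℝⁿ is k, and the set of minimizers of f is exactly the simplex { x ∈ ℝⁿ : x_i ≤ 0 for all i, and Σ_{i=1}^n x_i ≥ −k }. -/
open Finset

/-- for `n ≥ 1` and `k ≥ 0`, the function
`f(x) = ∑ᵢ |xᵢ| + |∑ᵢ xᵢ + k|` on `ℝⁿ` has minimum value `k`, and its set of minimizers is
exactly the simplex `{x : xᵢ ≤ 0 ∀i, ∑ᵢ xᵢ ≥ -k}`. -/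
theorem stmt11 (n : ℕ) (hn : 1 ≤ n) (k : ℝ) (hk : 0 ≤ k) :
    IsLeast (Set.range fun x : Fin n → ℝ => (∑ i, |x i|) + |(∑ i, x i) + k|) k ∧
    {x : Fin n → ℝ |
        ∀ y : Fin n → ℝ,
          (∑ i, |x i|) + |(∑ i, x i) + k| ≤ (∑ i, |y i|) + |(∑ i, y i) + k|} =
      {x : Fin n → ℝ | (∀ i, x i ≤ 0) ∧ -k ≤ ∑ i, x i} := by
  have key : ∀ y : Fin n → ℝ, k ≤ (∑ i, |y i|) + |(∑ i, y i) + k| := by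
    intro y
    have h1 : -(∑ i, y i) ≤ ∑ i, |y i| := by
      rw [← Finset.sum_neg_distrib]
      exact Finset.sum_le_sum fun i _ => neg_le_abs (y i)
    have h2 := le_abs_self ((∑ i, y i) + k)
    linarith
  refine ⟨⟨⟨0, by simp [abs_of_nonneg hk]⟩, ?_⟩, ?_⟩
  · rintro _ ⟨y, rfl⟩
    exact key y
  · ext x
    simp only [Set.mem_setOf_eq]
    constructor
    · intro h
      have h0 : (∑ i, |x i|) + |(∑ i, x i) + k| ≤ k := by
        have h1 := h 0
        simpa [abs_of_nonneg hk] using h1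
      have hx : ∀ i, x i ≤ 0 := by
        intro j
        have h1 : |x j| + x j ≤ ∑ i, (|x i| + x i) :=
          Finset.single_le_sum (f := fun i => |x i| + x i)
            (fun i _ => by linarith [neg_le_abs (x i)]) (Finset.mem_univ j)
        rw [Finset.sum_add_distrib] at h1
        linarith [le_abs_self ((∑ i, x i) + k), abs_nonneg (x j), le_abs_self (x j)]
      refine ⟨hx, ?_⟩
      have h2 : ∑ i, |x i| = -(∑ i, x i) := by
        rw [← Finset.sum_neg_distrib]
        exact Finset.sum_congr rfl fun i _ => abs_of_nonpos (hx i)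
      linarith [abs_nonneg ((∑ i, x i) + k)]
    · rintro ⟨hx, hs⟩ y
      have h2 : ∑ i, |x i| = -(∑ i, x i) := by
        rw [← Finset.sum_neg_distrib]
        exact Finset.sum_congr rfl fun i _ => abs_of_nonpos (hx i)
      have h3 : |(∑ i, x i) + k| = (∑ i, x i) + k := abs_of_nonneg (by linarith)
      linarith [key y]
end

section
/- Let n ≥ 1 and real constants 0 ≤ k₂ ≤ k₁ be given with k₂ < k₁/(n+1), and define f : ℝⁿ → ℝ by f(x) = max( max_{1≤i≤n} |x_i|, |Σ_{i=1}^n x_i + k₁|, k₂ ). Then f has a unique minimizer over ℝⁿ, namely the point x with x_i = −k₁/(n+1) for all i, and the minimum value of f is k₁/(n+1). -/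
open Finset

/-- The function `f(x) = max( maxᵢ |xᵢ|, |∑ᵢ xᵢ + k₁|, k₂ )` on `ℝⁿ`, `n ≥ 1`. -/
noncomputable def fLinf (n : ℕ) (hn : 1 ≤ n) (k₁ k₂ : ℝ) (x : Fin n → ℝ) : ℝ :=
  max (Finset.univ.sup' (Finset.univ_nonempty_iff.mpr ⟨⟨0, hn⟩⟩) fun i => |x i|)
    (max |(∑ i, x i) + k₁| k₂)

/-- for `0 ≤ k₂ ≤ k₁` with `k₂ < k₁/(n+1)`, the function
`f(x) = max( maxᵢ |xᵢ|, |∑ᵢ xᵢ + k₁|, k₂ )` has a unique minimizer over `ℝⁿ`, namely the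
point with all coordinates `-k₁/(n+1)`, and its minimum value is `k₁/(n+1)`. -/
theorem stmt13 (n : ℕ) (hn : 1 ≤ n) (k₁ k₂ : ℝ)
    (hk₂ : 0 ≤ k₂) (hk₁₂ : k₂ ≤ k₁) (hcase : k₂ < k₁ / ((n : ℝ) + 1)) :
    fLinf n hn k₁ k₂ (fun _ => -(k₁ / ((n : ℝ) + 1))) = k₁ / ((n : ℝ) + 1) ∧
    (∀ x : Fin n → ℝ, fLinf n hn k₁ k₂ (fun _ => -(k₁ / ((n : ℝ) + 1))) ≤ fLinf n hn k₁ k₂ x) ∧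
    (∀ x : Fin n → ℝ, (∀ y : Fin n → ℝ, fLinf n hn k₁ k₂ x ≤ fLinf n hn k₁ k₂ y) →
      x = fun _ => -(k₁ / ((n : ℝ) + 1))) := by
  have hpos : (0 : ℝ) < (n : ℝ) + 1 := by positivity
  obtain ⟨c, hc⟩ : ∃ c, c = k₁ / ((n : ℝ) + 1) := ⟨_, rfl⟩
  have hk : k₁ = ((n : ℝ) + 1) * c := by rw [hc]; field_simp
  rw [← hc] at hcase ⊢
  have hc0 : 0 < c := lt_of_le_of_lt hk₂ hcase
  have hval : fLinf n hn k₁ k₂ (fun _ => -c) = c := by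
    have h1 : (∑ _i : Fin n, -c) + k₁ = c := by
      rw [hk]; simp; ring
    unfold fLinf
    rw [h1, Finset.sup'_const, abs_neg, abs_of_pos hc0, max_eq_left hcase.le, max_self]
  have key : ∀ x : Fin n → ℝ, fLinf n hn k₁ k₂ x ≤ c → x = fun _ => -c := by
    intro x hx
    unfold fLinf at hx
    rw [max_le_iff, max_le_iff, Finset.sup'_le_iff] at hx
    obtain ⟨h1, h2, -⟩ := hx
    have h0 : ∀ i ∈ (Finset.univ : Finset (Fin n)), 0 ≤ x i + c := fun i hi => by
      have := (abs_le.mp (h1 i hi)).1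
      linarith
    have hs : ∑ i, (x i + c) = (∑ i, x i) + n * c := by
      simp [Finset.sum_add_distrib]
    have hz : ∑ i, (x i + c) = 0 := by
      apply le_antisymm _ (Finset.sum_nonneg h0)
      have := (abs_le.mp h2).2
      rw [hs]
      linarith
    funext i
    have := (Finset.sum_eq_zero_iff_of_nonneg h0).mp hz i (Finset.mem_univ i)
    linarith
  refine ⟨hval, fun x => ?_, fun x hx => key x ((hx _).trans hval.le)⟩
  by_contra hlt
  rw [not_le, hval] at hlt
  have h := key x hlt.le
  rw [h, hval] at hlt
  exact lt_irrefl _ hlt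
end

section
/- Let m₁ and m₂ be mass functions on a finite nonempty set Θ such that pl₁(C) > 0 for every C ⊆ Θ with m₂(C) > 0, where pl₁ is the plausibility of m₁. Then the Dempster combination m₁ ⊕ m₂ is well defined and decomposes as the convex combination m₁ ⊕ m₂ = Σ_{C : m₂(C)>0} μ(C) · (m₁ ⊕ m_C), where m_C is the categorical mass function assigning mass 1 to C, and μ(C) = m₂(C)·pl₁(C) / Σ_{X⊆Θ} m₂(X)·pl₁(X); in particular Σ_C μ(C) = 1 and μ(C) ≥ 0. -/
open Finset

/-- The Dempster conflict `κ = ∑_{B ∩ C = ∅} m₁(B) m₂(C)`. -/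
def conflict {Θ : Type*} [Fintype Θ] [DecidableEq Θ] (m₁ m₂ : Finset Θ → ℝ) : ℝ :=
  ∑ B : Finset Θ, ∑ C : Finset Θ, if B ∩ C = ∅ then m₁ B * m₂ C else 0

/-- The Dempster combination `m₁ ⊕ m₂`:
`(m₁ ⊕ m₂)(A) = (∑_{B ∩ C = A} m₁(B) m₂(C)) / (1 - κ)` for `A ≠ ∅`, and `0` at `∅`. -/
noncomputable def demp {Θ : Type*} [Fintype Θ] [DecidableEq Θ] (m₁ m₂ : Finset Θ → ℝ) :
    Finset Θ → ℝ :=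
  fun A =>
    if A = ∅ then 0
    else (∑ B : Finset Θ, ∑ C : Finset Θ, if B ∩ C = A then m₁ B * m₂ C else 0) /
      (1 - conflict m₁ m₂)

/-- The categorical mass function assigning mass `1` to `C`. -/
def catMass {Θ : Type*} [Fintype Θ] [DecidableEq Θ] (C : Finset Θ) : Finset Θ → ℝ :=
  fun B => if B = C then 1 else 0

/-- The weights `μ(C) = m₂(C) pl₁(C) / ∑_X m₂(X) pl₁(X)` of the convex decomposition. -/
noncomputable def dempWeight {Θ : Type*} [Fintype Θ] [DecidableEq Θ]
    (m₁ m₂ : Finset Θ → ℝ) (C : Finset Θ) : ℝ :=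
  m₂ C * plaus m₁ C / ∑ X : Finset Θ, m₂ X * plaus m₁ X

theorem aux_plaus_s16 {Θ : Type*} [Fintype Θ] [DecidableEq Θ]
    (m : Finset Θ → ℝ) (hm : IsMassFun m) (C : Finset Θ) :
    plaus m C = 1 - ∑ B : Finset Θ, if B ∩ C = ∅ then m B else 0 := by
  rw [← hm.2.2, ← Finset.sum_sub_distrib, plaus, Finset.sum_filter]
  refine Finset.sum_congr rfl fun B _ => ?_
  by_cases h : B ∩ C = ∅
  · simp [h]
  · simp [h, Finset.nonempty_iff_ne_empty]

theorem aux_conflict {Θ : Type*} [Fintype Θ] [DecidableEq Θ]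
    (m₁ m₂ : Finset Θ → ℝ) (hm₁ : IsMassFun m₁) (hs : ∑ B : Finset Θ, m₂ B = 1) :
    1 - conflict m₁ m₂ = ∑ X : Finset Θ, m₂ X * plaus m₁ X := by
  simp only [aux_plaus_s16 m₁ hm₁, mul_sub, mul_one, Finset.sum_sub_distrib, hs]
  rw [conflict, Finset.sum_comm]
  congr 1
  refine Finset.sum_congr rfl fun C _ => ?_
  rw [Finset.mul_sum]
  refine Finset.sum_congr rfl fun B _ => ?_
  split_ifs <;> ring

theorem aux_cat {Θ : Type*} [Fintype Θ] [DecidableEq Θ]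
    (m₁ : Finset Θ → ℝ) (hm₁ : IsMassFun m₁) (C A : Finset Θ) (hA : A ≠ ∅) :
    demp m₁ (catMass C) A = (∑ B : Finset Θ, if B ∩ C = A then m₁ B else 0) / plaus m₁ C := by
  have h1 : ∑ B : Finset Θ, catMass C B = 1 := by simp [catMass]
  rw [demp, if_neg hA, aux_conflict m₁ _ hm₁ h1]
  congr 1
  · refine Finset.sum_congr rfl fun B _ => ?_
    rw [Finset.sum_eq_single C]
    · simp [catMass]
    · intro D _ hD
      simp [catMass, hD]
    · simp
  · simp [catMass]

/-- if `pl₁(C) > 0` whenever `m₂(C) > 0`, then the Dempster combination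
`m₁ ⊕ m₂` is well defined (`κ < 1`) and decomposes as the convex combination
`m₁ ⊕ m₂ = ∑_{C : m₂(C) > 0} μ(C) · (m₁ ⊕ m_C)` with `μ(C) ≥ 0` and `∑ μ(C) = 1`. -/
theorem stmt16 {Θ : Type*} [Fintype Θ] [DecidableEq Θ] [Nonempty Θ]
    (m₁ m₂ : Finset Θ → ℝ) (hm₁ : IsMassFun m₁) (hm₂ : IsMassFun m₂)
    (hpl : ∀ C : Finset Θ, 0 < m₂ C → 0 < plaus m₁ C) :
    conflict m₁ m₂ < 1 ∧
    (∀ C : Finset Θ, 0 ≤ dempWeight m₁ m₂ C) ∧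
    (∑ C ∈ Finset.univ.filter (fun C : Finset Θ => 0 < m₂ C), dempWeight m₁ m₂ C = 1) ∧
    (∀ X : Finset Θ,
      demp m₁ m₂ X =
        ∑ C ∈ Finset.univ.filter (fun C : Finset Θ => 0 < m₂ C),
          dempWeight m₁ m₂ C * demp m₁ (catMass C) X) := by
  obtain ⟨hz, hnn, hs⟩ := hm₂
  have hp0 : ∀ C, 0 ≤ plaus m₁ C := fun C => Finset.sum_nonneg fun B _ => hm₁.2.1 B
  have hc := aux_conflict m₁ m₂ hm₁ hs
  have hterm : ∀ C ∈ (Finset.univ : Finset (Finset Θ)), 0 ≤ m₂ C * plaus m₁ C :=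
    fun C _ => mul_nonneg (hnn C) (hp0 C)
  have hpos : 0 < ∑ X : Finset Θ, m₂ X * plaus m₁ X := by
    obtain ⟨C, _, hC⟩ : ∃ C ∈ (Finset.univ : Finset (Finset Θ)), 0 < m₂ C := by
      apply Finset.exists_lt_of_sum_lt (f := fun _ => (0 : ℝ))
      simp [hs]
    exact Finset.sum_pos' hterm ⟨C, Finset.mem_univ _, mul_pos hC (hpl C hC)⟩
  have hfil : ∀ f : Finset Θ → ℝ, (∀ C, m₂ C = 0 → f C = 0) →
      ∑ C ∈ Finset.univ.filter (fun C : Finset Θ => 0 < m₂ C), f C = ∑ C, f C := by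
    intro f hf
    apply Finset.sum_filter_of_ne
    intro C _ hC
    exact lt_of_le_of_ne (hnn C) fun h => hC (hf C h.symm)
  have hw0 : ∀ C, m₂ C = 0 → dempWeight m₁ m₂ C = 0 := fun C h => by simp [dempWeight, h]
  refine ⟨by linarith, fun C => div_nonneg (hterm C (Finset.mem_univ _)) hpos.le, ?_, ?_⟩
  · rw [hfil _ hw0]
    simp only [dempWeight]
    rw [← Finset.sum_div, div_self hpos.ne']
  · intro A
    by_cases hA : A = ∅
    · simp [demp, hA]
    rw [hfil _ fun C h => by rw [hw0 C h, zero_mul]]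
    rw [demp, if_neg hA, hc, Finset.sum_comm, Finset.sum_div]
    refine Finset.sum_congr rfl fun C _ => ?_
    rw [aux_cat m₁ hm₁ C A hA, dempWeight]
    have e : (∑ B : Finset Θ, if B ∩ C = A then m₁ B * m₂ C else 0)
        = m₂ C * ∑ B : Finset Θ, if B ∩ C = A then m₁ B else 0 := by
      rw [Finset.mul_sum]
      refine Finset.sum_congr rfl fun B _ => ?_
      split_ifs <;> ring
    rw [e]
    rcases (hnn C).eq_or_lt with h | h
    · simp [← h]
    · have := (hpl C h).ne'
      have := hpos.ne'
      field_simp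
end
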